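/- Fix an integer r ≥ 1. There exist constants C = C(r) > 0 and c = c(r) > 0 such that for every ε with 0 < ε < 1 the following holds. Set K = ⌈(3/ε)^{1/r}⌉. There exists a tanh-MLP network ũ : ℝ^{K+2} → ℝ whose total number of weights is at most C·(ε^{−3/r} + ε^{−1/r}·(log(ε^{−(1+1/r)}))²) such that: for every real sequence (c_k)_{k≥1} with Σ_{k=1}^{∞} (2πk)^{2r} c_k² ≤ 2 (equivalently, the initial condition f(x) = Σ_{k=1}^{∞} c_k sin(2πkx) satisfies ‖f^{(r)}‖_{L²[0,1]} ≤ 1), and for every t ∈ [0,1], the function x ↦ ũ(c₁, …, c_K, t, x) satisfies ( ∫₀¹ | u(x,t) − ũ(c₁, …, c_K, t, x) |² dx )^{1/2} ≤ ε, where u(x,t) = Σ_{k=1}^{∞} e^{−4π²k²t} c_k sin(2πkx) is the solution of the heat equation u_t = u_xx on [0,1] with initial condition f. -/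

import Mathlib

/-!
Only the number of weights is bounded, not their size, so every limit of networks of one fixed
shape is available for free. This makes a single hidden layer sufficient.

A neuron `tanh (y / 2 + log s / 2)`, shifted and rescaled by an affine map, equals
`e^y / (1 + s e^y)` and tends to `e^y` as `s → 0⁺` (`one_add_tanh_div`). Hence a sum of `P`
exponentials of linear forms is a locally uniform limit of one-hidden-layer networks with `P`
neurons (`exists_net_exp_sum`). Since `(e^{hy} - 1) / h → y`, the product `e^{a_k t} c_k x^j` is
itself a limit of linear combinations of exponentials of `a_k t + s h c_k + i h x` with
`s ∈ {0, 1}` and `0 ≤ i ≤ j`. So `Σ_{k ≤ K} e^{a_k t} c_k p_k(x)` with `deg p_k < n` is a limit of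
networks with `2 K n` neurons (`exists_net_mode_sum`).

A truncated Taylor series of `sin (2πkx)`, `k ≤ K`, with `n = (22 + r) K` terms is accurate to
`ε / (8K)` on `[0, 1]` (`exists_mode_poly`), because `1 / ε ≤ K^r` while the error decays
exponentially in `K`. The network then has `O_r(K²)` neurons and, with `K + 2` inputs,
`O_r(K³) = O_r(ε^{-3/r})` weights; the logarithmic term of the bound is not needed.

The discarded modes `k > K` are controlled in `L²` by orthogonality of the sines: their squared norm
is at most `½ Σ_{k > K} c_k² ≤ K^{-2r} ≤ (ε / 3)²` (`l2_error_le`).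
-/

open Real

/-- A multi-layer perceptron with `tanh` activations: a composition
`L_m ∘ σ ∘ L_{m-1} ∘ σ ∘ ⋯ ∘ σ ∘ L₁` of affine layers `L_j v = M_j v + b_j`
with coordinatewise `tanh` nonlinearities between them (none after the last layer). -/
inductive TanhMLP : ℕ → ℕ → Type
  | last {n m : ℕ} (M : Matrix (Fin m) (Fin n) ℝ) (b : Fin m → ℝ) : TanhMLP n m
  | layer {n k m : ℕ} (M : Matrix (Fin k) (Fin n) ℝ) (b : Fin k → ℝ)
      (rest : TanhMLP k m) : TanhMLP n m

/-- Evaluation of a tanh-MLP network. -/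
noncomputable def TanhMLP.eval : {n m : ℕ} → TanhMLP n m → (Fin n → ℝ) → Fin m → ℝ
  | _, _, .last M b, v => fun i => M.mulVec v i + b i
  | _, _, .layer M b rest, v => rest.eval fun i => Real.tanh (M.mulVec v i + b i)

/-- Total number of weights (entries of all matrices and bias vectors). -/
def TanhMLP.weights : {n m : ℕ} → TanhMLP n m → ℕ
  | n, m, .last _ _ => m * n + m
  | n, _, .layer (k := k) _ _ rest => k * n + k + rest.weights

/-- The exact solution `u(x,t) = Σ_{k=1}^∞ e^{−4π²k²t} c_k sin(2πkx)` of the heat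
equation `u_t = u_xx` on `[0,1]` with initial condition `f(x) = Σ c_k sin(2πkx)`;
here `c : ℕ → ℝ` lists the coefficients, `c k` being the coefficient of `sin(2π(k+1)x)`. -/
noncomputable def heatSol (c : ℕ → ℝ) (x t : ℝ) : ℝ :=
  ∑' k : ℕ, Real.exp (-(4 * π ^ 2 * ((k : ℝ) + 1) ^ 2 * t)) * c k *
    Real.sin (2 * π * ((k : ℝ) + 1) * x)

/-! ### Polynomial approximation of the sine -/

/-- Chernoff-type bound on the exponential tail: for `m ≥ n`, the `m`-th term at `y` is at most
`e^{-n}` times the `m`-th term at `e y`. -/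
theorem exp_sub_sum_le {y : ℝ} (hy : 0 ≤ y) (n : ℕ) :
    Real.exp y - ∑ m ∈ Finset.range n, y ^ m / (m.factorial : ℝ)
      ≤ Real.exp (Real.exp 1 * y - n) := by
  have hexp : ∀ z : ℝ, HasSum (fun m : ℕ => z ^ m / (m.factorial : ℝ)) (Real.exp z) := by
    intro z
    have h := NormedSpace.expSeries_div_hasSum_exp (𝔸 := ℝ) z
    rwa [← Real.exp_eq_exp_ℝ] at h
  have h1 := (hasSum_nat_add_iff' n).2 (hexp y)
  have h2 := ((hasSum_nat_add_iff' n).2 (hexp (Real.exp 1 * y))).mul_left (Real.exp (-(n : ℝ)))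
  have h3 : ∀ m : ℕ, y ^ (m + n) / ((m + n).factorial : ℝ) ≤
      Real.exp (-(n : ℝ)) * ((Real.exp 1 * y) ^ (m + n) / ((m + n).factorial : ℝ)) := by
    intro m
    have h4 : (1 : ℝ) ≤ Real.exp (-(n : ℝ)) * Real.exp 1 ^ (m + n) := by
      rw [← Real.exp_nat_mul, ← Real.exp_add]
      apply Real.one_le_exp
      push_cast
      have : (0 : ℝ) ≤ m := Nat.cast_nonneg m
      linarith
    rw [mul_pow, ← mul_div_assoc, ← mul_assoc]
    gcongr
    exact le_mul_of_one_le_left (by positivity) h4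
  refine (hasSum_le h3 h1 h2).trans ?_
  rw [sub_eq_add_neg (Real.exp 1 * y), add_comm, Real.exp_add]
  gcongr
  have : 0 ≤ ∑ i ∈ Finset.range n, (Real.exp 1 * y) ^ i / (i.factorial : ℝ) := by positivity
  linarith

/-- The polynomial is the imaginary part of the Taylor polynomial of `exp (i a x)`. The bound decays
exponentially in `n` as soon as `n` exceeds `e |a x|` by a fixed factor. -/
theorem exists_sin_poly (a : ℝ) (n : ℕ) (hn : 0 < n) :
    ∃ p : Polynomial ℝ, p.natDegree < n ∧ ∀ x : ℝ,
      |Real.sin (a * x) - p.eval x| ≤ Real.exp (Real.exp 1 * |a * x| - n) := by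
  refine ⟨∑ m ∈ Finset.range n,
    Polynomial.monomial m ((Complex.I ^ m).im * a ^ m / (m.factorial : ℝ)), ?_, fun x => ?_⟩
  · have : (∑ m ∈ Finset.range n, Polynomial.monomial m
        ((Complex.I ^ m).im * a ^ m / (m.factorial : ℝ))).natDegree ≤ n - 1 := by
      apply Polynomial.natDegree_sum_le_of_forall_le
      intro i hi
      have := Finset.mem_range.1 hi
      exact (Polynomial.natDegree_monomial_le _).trans (by omega)
    omega
  · have h := Complex.norm_exp_sub_sum_le_exp_norm_sub_sum (((a * x : ℝ) : ℂ) * Complex.I) n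
    have hnorm : ‖((a * x : ℝ) : ℂ) * Complex.I‖ = |a * x| := by simp
    rw [hnorm] at h
    refine le_trans ?_ (h.trans (exp_sub_sum_le (abs_nonneg _) n))
    refine le_of_eq_of_le ?_ (Complex.abs_im_le_norm _)
    congr 1
    rw [Complex.sub_im, Complex.exp_ofReal_mul_I_im, Complex.im_sum, Polynomial.eval_finsetSum]
    congr 1
    refine Finset.sum_congr rfl fun m _ => ?_
    have : (((a * x : ℝ) : ℂ) * Complex.I) ^ m / (m.factorial : ℂ) =
        (((a * x) ^ m / (m.factorial : ℝ) : ℝ) : ℂ) * Complex.I ^ m := by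
      push_cast; ring
    rw [this, Complex.im_ofReal_mul, Polynomial.eval_monomial]
    ring

/-! ### Orthogonality of the sines -/

theorem integral_cos_two_pi {j : ℤ} (hj : j ≠ 0) :
    ∫ x in (0 : ℝ)..1, Real.cos (2 * π * j * x) = 0 := by
  have h : (2 * π * j : ℝ) ≠ 0 := by
    have : (j : ℝ) ≠ 0 := by exact_mod_cast hj
    positivity
  rw [intervalIntegral.integral_comp_mul_left (fun x => Real.cos x) h, integral_cos]
  have : Real.sin (2 * π * j * 1) = 0 := by
    rw [show (2 * π * j * 1 : ℝ) = ((2 * j : ℤ) : ℝ) * π by push_cast; ring]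
    exact Real.sin_int_mul_pi _
  rw [this]; simp

theorem integral_sin_mul_sin (k l : ℕ) :
    ∫ x in (0 : ℝ)..1, Real.sin (2 * π * ((k : ℝ) + 1) * x) * Real.sin (2 * π * ((l : ℝ) + 1) * x)
      = if k = l then 1 / 2 else 0 := by
  have h : ∀ x : ℝ, Real.sin (2 * π * ((k : ℝ) + 1) * x) * Real.sin (2 * π * ((l : ℝ) + 1) * x) =
      (1 / 2) * (Real.cos (2 * π * ((k - l : ℤ) : ℝ) * x) -
        Real.cos (2 * π * ((k + l + 2 : ℤ) : ℝ) * x)) := by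
    intro x
    rw [show 2 * π * ((k - l : ℤ) : ℝ) * x =
        2 * π * ((k : ℝ) + 1) * x - 2 * π * ((l : ℝ) + 1) * x by push_cast; ring,
      show 2 * π * ((k + l + 2 : ℤ) : ℝ) * x =
        2 * π * ((k : ℝ) + 1) * x + 2 * π * ((l : ℝ) + 1) * x by push_cast; ring,
      Real.cos_sub, Real.cos_add]
    ring
  simp_rw [h]
  rw [intervalIntegral.integral_const_mul, intervalIntegral.integral_sub
    (Continuous.intervalIntegrable (by fun_prop) _ _)
    (Continuous.intervalIntegrable (by fun_prop) _ _),
    integral_cos_two_pi (j := k + l + 2) (by omega)]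
  split_ifs with hkl
  · subst hkl; simp
  · rw [integral_cos_two_pi (by omega)]; simp

theorem integral_sq_sum_sin (s : Finset ℕ) (b : ℕ → ℝ) :
    ∫ x in (0 : ℝ)..1, (∑ k ∈ s, b k * Real.sin (2 * π * ((k : ℝ) + 1) * x)) ^ 2
      = (1 / 2) * ∑ k ∈ s, b k ^ 2 := by
  have h : ∀ x : ℝ, (∑ k ∈ s, b k * Real.sin (2 * π * ((k : ℝ) + 1) * x)) ^ 2 =
      ∑ k ∈ s, ∑ l ∈ s, (b k * b l) * (Real.sin (2 * π * ((k : ℝ) + 1) * x) *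
        Real.sin (2 * π * ((l : ℝ) + 1) * x)) := by
    intro x
    rw [sq, Finset.sum_mul_sum]
    exact Finset.sum_congr rfl fun k _ => Finset.sum_congr rfl fun l _ => by ring
  simp_rw [h]
  rw [intervalIntegral.integral_finsetSum
    fun _ _ => Continuous.intervalIntegrable (by fun_prop) _ _, Finset.mul_sum]
  refine Finset.sum_congr rfl fun k hk => ?_
  rw [intervalIntegral.integral_finsetSum
    fun _ _ => Continuous.intervalIntegrable (by fun_prop) _ _]
  simp_rw [intervalIntegral.integral_const_mul, integral_sin_mul_sin]
  simp [hk]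
  ring

/-! ### One hidden layer approximates sums of exponentials -/

/-- A jointly continuous family converges uniformly on compact sets as the parameter tends to `0`
from the right. -/
theorem exists_pos_uniform_close {d : ℕ} {Q : Set (Fin d → ℝ)} (hQ : IsCompact Q)
    {F : ℝ → (Fin d → ℝ) → ℝ} (hF : Continuous (Function.uncurry F)) {δ : ℝ} (hδ : 0 < δ) :
    ∃ h : ℝ, 0 < h ∧ ∀ v ∈ Q, |F 0 v - F h v| ≤ δ := by
  have hc : IsCompact (Set.Icc (0 : ℝ) 1 ×ˢ Q) := isCompact_Icc.prod hQ
  have hu := hc.uniformContinuousOn_of_continuous hF.continuousOn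
  obtain ⟨η, hη, H⟩ := Metric.uniformContinuousOn_iff.1 hu δ hδ
  refine ⟨min 1 (η / 2), by positivity, fun v hv => ?_⟩
  have h1 : 0 < min 1 (η / 2) := by positivity
  have := H (0, v) ⟨by simp, hv⟩ (min 1 (η / 2), v) ⟨⟨h1.le, min_le_left _ _⟩, hv⟩ (by
    rw [Prod.dist_eq, dist_self, Real.dist_eq, zero_sub, abs_neg, abs_of_pos h1,
      max_eq_left h1.le]
    exact (min_le_right _ _).trans_lt (by linarith))
  exact this.le

/-- A single `tanh` neuron with a very negative bias looks like an exponential. The absolute value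
makes the right-hand side continuous in `s` on all of `ℝ`, with value `e^y` at `s = 0`. -/
theorem one_add_tanh_div (s : ℝ) (hs : 0 < s) (y : ℝ) :
    (1 + Real.tanh (y / 2 + Real.log s / 2)) / (2 * s) = Real.exp y / (1 + |s| * Real.exp y) := by
  have h1 : Real.exp (y / 2 + Real.log s / 2) ^ 2 = s * Real.exp y := by
    rw [← Real.exp_nat_mul, show ((2 : ℕ) : ℝ) * (y / 2 + Real.log s / 2) = Real.log s + y by
      push_cast; ring, Real.exp_add, Real.exp_log hs]
  rw [abs_of_pos hs, Real.tanh_eq, Real.exp_neg]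
  generalize Real.exp (y / 2 + Real.log s / 2) = E at *
  have hy : 0 < Real.exp y := Real.exp_pos y
  have hE : E ≠ 0 := by
    rintro rfl
    have : 0 < s * Real.exp y := by positivity
    simp at h1; aesop
  have e1 : 1 + (E - E⁻¹) / (E + E⁻¹) = 2 * E ^ 2 / (1 + E ^ 2) := by
    have : E + E⁻¹ ≠ 0 := by
      intro h
      field_simp at h
      nlinarith [sq_nonneg E]
    field_simp
    ring
  rw [e1, h1]
  field_simp

/-- A sum of exponentials of linear forms is a uniform limit on compact sets of networks with one
hidden layer, having one neuron per exponential. -/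
theorem exists_net_exp_sum {ι : Type} [Fintype ι] {d : ℕ} (A : ι → ℝ) (L : ι → Fin d → ℝ)
    {Q : Set (Fin d → ℝ)} (hQ : IsCompact Q) {δ : ℝ} (hδ : 0 < δ) :
    ∃ net : TanhMLP d 1, net.weights = Fintype.card ι * d + Fintype.card ι + (Fintype.card ι + 1) ∧
      ∀ v ∈ Q, |∑ q, A q * Real.exp (∑ j, L q j * v j) - net.eval v 0| ≤ δ := by
  obtain ⟨s, hs, H⟩ := exists_pos_uniform_close hQ
    (F := fun s v => ∑ q, A q * (Real.exp (∑ j, L q j * v j) /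
      (1 + |s| * Real.exp (∑ j, L q j * v j)))) (by
        unfold Function.uncurry
        refine continuous_finsetSum _ fun q _ => continuous_const.mul (Continuous.div ?_ ?_ ?_)
        · fun_prop
        · fun_prop
        · intro x; positivity) hδ
  let e := Fintype.equivFin ι
  refine ⟨.layer (k := Fintype.card ι) (Matrix.of fun i j => L (e.symm i) j / 2)
    (fun _ => Real.log s / 2)
    (.last (Matrix.of fun _ i => A (e.symm i) / (2 * s)) fun _ => ∑ q, A q / (2 * s)), ?_, ?_⟩
  · simp [TanhMLP.weights]
  · intro v hv
    have key : (TanhMLP.eval (.layer (k := Fintype.card ι)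
        (Matrix.of fun i j => L (e.symm i) j / 2) (fun _ => Real.log s / 2)
        (.last (m := 1) (Matrix.of fun _ i => A (e.symm i) / (2 * s)) fun _ => ∑ q, A q / (2 * s))) v 0)
        = ∑ q, A q * (Real.exp (∑ j, L q j * v j) /
            (1 + |s| * Real.exp (∑ j, L q j * v j))) := by
      simp only [TanhMLP.eval, Matrix.mulVec, dotProduct, Matrix.of_apply]
      rw [← e.symm.sum_comp (fun q => A q / (2 * s)), ← Finset.sum_add_distrib,
        ← e.symm.sum_comp]
      refine Finset.sum_congr rfl fun i _ => ?_
      rw [← one_add_tanh_div s hs, Finset.sum_div]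
      simp_rw [div_mul_eq_mul_div]
      ring
    rw [key]
    simpa using H v hv

/-! ### Products and polynomials as limits of sums of exponentials -/

/-- The difference quotient `(e^{hy} - 1) / h`, extended by its limit `y` at `h = 0`; the encoding
through `dslope` makes joint continuity in `(h, y)` immediate. -/
noncomputable def expQuot (h y : ℝ) : ℝ := y * dslope Real.exp 0 (h * y)

theorem continuous_expQuot : Continuous (Function.uncurry expQuot) := by
  have : Continuous (dslope Real.exp 0) := by
    rw [← continuousOn_univ, continuousOn_dslope Filter.univ_mem]
    exact ⟨Real.continuous_exp.continuousOn, Real.differentiableAt_exp⟩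
  unfold Function.uncurry expQuot
  fun_prop

theorem expQuot_zero (y : ℝ) : expQuot 0 y = y := by
  simp [expQuot, dslope_same]

theorem expQuot_of_ne {h : ℝ} (hh : h ≠ 0) (y : ℝ) : expQuot h y = (Real.exp (h * y) - 1) / h := by
  rcases eq_or_ne y 0 with rfl | hy
  · simp [expQuot]
  · rw [expQuot, dslope_of_ne _ (mul_ne_zero hh hy), slope_def_field]
    simp only [Real.exp_zero, sub_zero]
    field_simp

/-- A polynomial of degree less than `n` in `(e^{hx} - 1) / h` is a polynomial of degree less than
`n` in `e^{hx}`. -/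
theorem eval_expQuot {h : ℝ} (hh : h ≠ 0) (p : Polynomial ℝ) {n : ℕ} (hp : p.natDegree < n) :
    ∃ B : Fin n → ℝ, ∀ x : ℝ, p.eval (expQuot h x) = ∑ i, B i * Real.exp ((i : ℝ) * (h * x)) := by
  let q : Polynomial ℝ := p.comp (Polynomial.C h⁻¹ * (Polynomial.X - 1))
  have hq : q.natDegree < n := by
    refine lt_of_le_of_lt ?_ hp
    refine Polynomial.natDegree_comp_le.trans ?_
    have : (Polynomial.C h⁻¹ * (Polynomial.X - 1 : Polynomial ℝ)).natDegree ≤ 1 := by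
      compute_degree
    nlinarith
  refine ⟨fun i => q.coeff i, fun x => ?_⟩
  have : p.eval (expQuot h x) = q.eval (Real.exp (h * x)) := by
    simp [q, expQuot_of_ne hh, div_eq_inv_mul]
  rw [this, Polynomial.eval_eq_sum_range' hq, Finset.sum_range]
  simp_rw [Real.exp_nat_mul]

/-- Approximation of `Σ_k e^{a_k t} c_k p_k(x)` on a compact set of inputs `(c, t, x)`. Replacing
`c_k` and `x` by their difference quotients `expQuot h` gives a sum of `K * 2 * n` exponentials of
linear forms: per mode `k`, two from `c_k` and `n` from `p_k`. -/
theorem exists_net_mode_sum {K n : ℕ} (a : Fin K → ℝ) (p : Fin K → Polynomial ℝ)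
    (hp : ∀ k, (p k).natDegree < n) {Q : Set (Fin (K + 2) → ℝ)} (hQ : IsCompact Q)
    {δ : ℝ} (hδ : 0 < δ) :
    ∃ net : TanhMLP (K + 2) 1,
      net.weights = K * (2 * n) * (K + 2) + K * (2 * n) + (K * (2 * n) + 1) ∧
      ∀ v ∈ Q, |∑ k : Fin K, Real.exp (a k * v (Fin.last K).castSucc) * v k.castSucc.castSucc *
        (p k).eval (v (Fin.last (K + 1))) - net.eval v 0| ≤ δ := by
  have hφ := continuous_expQuot
  obtain ⟨h, hh, H⟩ := exists_pos_uniform_close hQ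
    (F := fun h v => ∑ k : Fin K, Real.exp (a k * v (Fin.last K).castSucc) *
      expQuot h (v k.castSucc.castSucc) * (p k).eval (expQuot h (v (Fin.last (K + 1))))) (by
        have hc : ∀ j : Fin (K + 2), Continuous fun x : ℝ × (Fin (K + 2) → ℝ) =>
            expQuot x.1 (x.2 j) := fun j => hφ.comp (by fun_prop : Continuous fun
              x : ℝ × (Fin (K + 2) → ℝ) => (x.1, x.2 j))
        unfold Function.uncurry
        refine continuous_finsetSum _ fun k _ => ?_
        exact (Continuous.mul (by fun_prop) (hc _)).mul ((p k).continuous.comp (hc _)))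
    (half_pos hδ)
  choose B hB using fun k => eval_expQuot hh.ne' (p k) (hp k)
  -- The index `(k, s, i)` stands for the exponential of `a_k t + s h c_k + i h x`.
  let A : Fin K × Fin 2 × Fin n → ℝ := fun q => (if q.2.1 = 0 then -1 else 1) / h * B q.1 q.2.2
  let L : Fin K × Fin 2 × Fin n → Fin (K + 2) → ℝ := fun q =>
    Fin.snoc (α := fun _ => ℝ)
      (Fin.snoc (α := fun _ => ℝ) (Pi.single q.1 ((q.2.1 : ℝ) * h)) (a q.1))
      ((q.2.2 : ℝ) * h)
  obtain ⟨net, hw, hnet⟩ := exists_net_exp_sum A L hQ (half_pos hδ)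
  refine ⟨net, by simpa using hw, fun v hv => ?_⟩
  have key : ∑ k : Fin K, Real.exp (a k * v (Fin.last K).castSucc) *
      expQuot h (v k.castSucc.castSucc) * (p k).eval (expQuot h (v (Fin.last (K + 1)))) =
      ∑ q, A q * Real.exp (∑ j, L q j * v j) := by
    rw [Fintype.sum_prod_type]
    refine Finset.sum_congr rfl fun k _ => ?_
    rw [Fintype.sum_prod_type, Fin.sum_univ_two, hB, ← Finset.sum_add_distrib, Finset.mul_sum]
    refine Finset.sum_congr rfl fun i _ => ?_
    have hL : ∀ s : Fin 2, ∑ j, L (k, s, i) j * v j = (s : ℝ) * h * v k.castSucc.castSucc +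
        a k * v (Fin.last K).castSucc + (i : ℝ) * (h * v (Fin.last (K + 1))) := by
      intro s
      rw [Fin.sum_univ_castSucc, Fin.sum_univ_castSucc]
      simp [L, Pi.single_apply, mul_assoc]
    rw [hL, hL, Real.exp_add, Real.exp_add, Real.exp_add, Real.exp_add, expQuot_of_ne hh.ne']
    simp [A]
    ring
  have h1 := H v hv
  have h2 := hnet v hv
  rw [← key] at h2
  simp only [expQuot_zero] at h1
  refine (abs_sub_le _ _ _).trans ((add_le_add h1 h2).trans (by linarith))

/-! ### The heat equation -/

theorem summable_abs_coeff {r : ℕ} (hr : 1 ≤ r) {c : ℕ → ℝ}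
    (hc : Summable (fun k : ℕ => (2 * π * ((k : ℝ) + 1)) ^ (2 * r) * c k ^ 2)) :
    Summable (fun k => |c k|) := by
  have h2 : Summable (fun k : ℕ => 1 / ((k : ℝ) + 1) ^ 2) := by
    have := (summable_nat_add_iff 1).2 (Real.summable_one_div_nat_pow.2 (by norm_num : 1 < 2))
    simpa using this
  refine Summable.of_nonneg_of_le (fun _ => abs_nonneg _) (fun k => ?_) (hc.add h2)
  have hk : (0 : ℝ) ≤ k := Nat.cast_nonneg k
  have hπ := Real.pi_gt_three
  have hw : ((k : ℝ) + 1) ^ 2 ≤ (2 * π * ((k : ℝ) + 1)) ^ (2 * r) := by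
    calc ((k : ℝ) + 1) ^ 2 ≤ (2 * π * ((k : ℝ) + 1)) ^ 2 := by
          gcongr; nlinarith
      _ ≤ _ := pow_le_pow_right₀ (by nlinarith) (by omega)
  -- AM-GM: `2 |c| ≤ m² c² + 1 / m²` with `m = k + 1`.
  refine le_trans ?_ (add_le_add_left (mul_le_mul_of_nonneg_right hw (sq_nonneg _)) _)
  have hm : 0 < (k : ℝ) + 1 := by positivity
  rw [← sq_abs (c k)]
  have h3 : 0 ≤ (((k : ℝ) + 1) * |c k| - 1 / ((k : ℝ) + 1)) ^ 2 := sq_nonneg _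
  have h4 : (((k : ℝ) + 1) * |c k| - 1 / ((k : ℝ) + 1)) ^ 2 =
      ((k : ℝ) + 1) ^ 2 * |c k| ^ 2 + 1 / ((k : ℝ) + 1) ^ 2 - 2 * |c k| := by
    field_simp
    ring
  linarith [abs_nonneg (c k)]

theorem abs_coeff_le_one {r : ℕ} (hr : 1 ≤ r) {c : ℕ → ℝ}
    (hc : Summable (fun k : ℕ => (2 * π * ((k : ℝ) + 1)) ^ (2 * r) * c k ^ 2))
    (hc2 : (∑' k : ℕ, (2 * π * ((k : ℝ) + 1)) ^ (2 * r) * c k ^ 2) ≤ 2) (k : ℕ) : |c k| ≤ 1 := by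
  have h := (hc.le_tsum k fun j _ => by positivity).trans hc2
  have hk : (0 : ℝ) ≤ k := Nat.cast_nonneg k
  have hπ := Real.pi_gt_three
  have hw : 2 ≤ (2 * π * ((k : ℝ) + 1)) ^ (2 * r) := by
    calc (2 : ℝ) ≤ 2 * π * ((k : ℝ) + 1) := by nlinarith
      _ ≤ _ := le_self_pow₀ (by nlinarith) (by omega)
  rw [← sq_le_one_iff_abs_le_one]
  nlinarith [sq_nonneg (c k)]

/-- A uniform approximation of the first `K` modes is an `L²` approximation of the whole solution.
The modes from `K` to a large cutoff are small in `L²` by orthogonality; those past the cutoff,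
which may depend on `c`, are uniformly small because `Σ |c_k|` converges. -/
theorem l2_error_le {r : ℕ} (hr : 1 ≤ r) {ε : ℝ} (hε : 0 < ε) {K : ℕ} (hK : 3 / ε ≤ (K : ℝ) ^ r)
    {c : ℕ → ℝ} (hc : Summable (fun k : ℕ => (2 * π * ((k : ℝ) + 1)) ^ (2 * r) * c k ^ 2))
    (hc2 : (∑' k : ℕ, (2 * π * ((k : ℝ) + 1)) ^ (2 * r) * c k ^ 2) ≤ 2)
    {t : ℝ} (ht : 0 ≤ t) (G : ℝ → ℝ)
    (hG : ∀ x ∈ Set.Icc (0 : ℝ) 1,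
      |∑ k ∈ Finset.range K, Real.exp (-(4 * π ^ 2 * ((k : ℝ) + 1) ^ 2 * t)) * c k *
        Real.sin (2 * π * ((k : ℝ) + 1) * x) - G x| ≤ ε / 4) :
    Real.sqrt (∫ x in (0 : ℝ)..1, (heatSol c x t - G x) ^ 2) ≤ ε := by
  have habs := summable_abs_coeff hr hc
  obtain ⟨m, hm⟩ : ∃ m : ℕ, ∑' k, |c (k + (m + K))| ≤ ε / 4 := by
    have h1 := (tendsto_sum_nat_add fun k => |c k|).comp (Filter.tendsto_add_atTop_nat K)
    exact (h1.eventually (eventually_le_nhds (by positivity : (0 : ℝ) < ε / 4))).exists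
  set b : ℕ → ℝ := fun k => Real.exp (-(4 * π ^ 2 * ((k : ℝ) + 1) ^ 2 * t)) * c k with hb
  have hbc : ∀ k, |b k| ≤ |c k| := by
    intro k
    rw [hb]
    simp only [abs_mul, Real.abs_exp]
    refine mul_le_of_le_one_left (abs_nonneg _) (Real.exp_le_one_iff.2 ?_)
    have : 0 ≤ 4 * π ^ 2 * ((k : ℝ) + 1) ^ 2 * t := by positivity
    linarith
  have hbs : ∀ k x, ‖b k * Real.sin (2 * π * ((k : ℝ) + 1) * x)‖ ≤ |c k| := by
    intro k x
    rw [Real.norm_eq_abs, abs_mul]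
    exact (mul_le_of_le_one_right (abs_nonneg _) (Real.abs_sin_le_one _)).trans (hbc k)
  set S : ℝ → ℝ := fun x => ∑ k ∈ Finset.Ico K (m + K), b k * Real.sin (2 * π * ((k : ℝ) + 1) * x)
    with hS
  have hScont : Continuous S := by fun_prop
  have hSint : ∫ x in (0 : ℝ)..1, S x ^ 2 ≤ ε ^ 2 / 9 := by
    rw [hS, integral_sq_sum_sin]
    have h1 : (9 / ε ^ 2) * ∑ k ∈ Finset.Ico K (m + K), b k ^ 2 ≤ 2 := by
      refine le_trans ?_ ((hc.sum_le_tsum (Finset.Ico K (m + K)) fun j _ => by positivity).trans hc2)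
      rw [Finset.mul_sum]
      refine Finset.sum_le_sum fun k hk => ?_
      have hkK : (K : ℝ) ≤ k := by exact_mod_cast (Finset.mem_Ico.1 hk).1
      have hπ := Real.pi_gt_three
      refine mul_le_mul ?_ (sq_le_sq.2 (hbc k)) (sq_nonneg _) (by positivity)
      calc 9 / ε ^ 2 = (3 / ε) ^ 2 := by ring
        _ ≤ ((K : ℝ) ^ r) ^ 2 := by gcongr
        _ = (K : ℝ) ^ (2 * r) := by rw [← pow_mul, mul_comm]
        _ ≤ _ := by
          gcongr
          nlinarith [(Nat.cast_nonneg K : (0 : ℝ) ≤ K)]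
    rw [div_mul_eq_mul_div, div_le_iff₀ (by positivity)] at h1
    linarith
  have hclose : ∀ x ∈ Set.Icc (0 : ℝ) 1, |heatSol c x t - G x - S x| ≤ ε / 2 := by
    intro x hx
    have hsum : Summable fun k => b k * Real.sin (2 * π * ((k : ℝ) + 1) * x) :=
      Summable.of_norm_bounded habs fun k => hbs k x
    have h1 := hsum.sum_add_tsum_nat_add (m + K)
    rw [← Finset.sum_range_add_sum_Ico _ (by omega : K ≤ m + K)] at h1
    have h2 : |∑' k, b (k + (m + K)) * Real.sin (2 * π * (((k + (m + K) : ℕ) : ℝ) + 1) * x)|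
        ≤ ε / 4 := by
      refine le_trans ?_ hm
      exact tsum_of_norm_bounded ((summable_nat_add_iff (m + K)).2 habs).hasSum fun k => hbs _ x
    have h3 := hG x hx
    have h4 : heatSol c x t = ∑' k, b k * Real.sin (2 * π * ((k : ℝ) + 1) * x) := rfl
    rw [h4, ← h1]
    rw [abs_le] at *
    constructor <;> linarith [h2.1, h2.2, h3.1, h3.2]
  -- `integral_mono_of_nonneg` needs no integrability of the left-hand side, so nothing is
  -- assumed about `G`.
  have hle : ∫ x in (0 : ℝ)..1, (heatSol c x t - G x) ^ 2 ≤
      ∫ x in (0 : ℝ)..1, (2 * S x ^ 2 + ε ^ 2 / 2) := by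
    rw [intervalIntegral.integral_of_le zero_le_one, intervalIntegral.integral_of_le zero_le_one]
    refine MeasureTheory.integral_mono_of_nonneg (Filter.Eventually.of_forall fun _ => sq_nonneg _)
      (Continuous.integrableOn_Ioc (by fun_prop)) ?_
    refine (MeasureTheory.ae_restrict_iff' measurableSet_Ioc).2 (Filter.Eventually.of_forall ?_)
    intro x hx
    have h1 := hclose x ⟨hx.1.le, hx.2⟩
    have h2 : (heatSol c x t - G x - S x) ^ 2 ≤ (ε / 2) ^ 2 :=
      sq_le_sq.2 (h1.trans (le_abs_self _))
    change (heatSol c x t - G x) ^ 2 ≤ 2 * S x ^ 2 + ε ^ 2 / 2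
    nlinarith [sq_nonneg (heatSol c x t - G x - S x - S x)]
  rw [intervalIntegral.integral_add (Continuous.intervalIntegrable (by fun_prop) _ _)
    (Continuous.intervalIntegrable (by fun_prop) _ _), intervalIntegral.integral_const_mul] at hle
  simp only [intervalIntegral.integral_const, sub_zero, smul_eq_mul, one_mul] at hle
  refine Real.sqrt_le_iff.2 ⟨hε.le, ?_⟩
  nlinarith [sq_nonneg ε]

/-- Degree proportional to `K` suffices. Of the factor `22 + r`, `18 ≥ 2πe` pays for the growth of
`exp (e · 2πK)`, and `e^{3K}`, `e^{rK}`, `e^K` dominate `8`, `1 / ε` and `K` respectively. -/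
theorem exists_mode_poly {r : ℕ} {ε : ℝ} (hε : 0 < ε) {K : ℕ} (hK : 3 / ε ≤ (K : ℝ) ^ r)
    (hK1 : 1 ≤ K) (k : Fin K) :
    ∃ p : Polynomial ℝ, p.natDegree < (22 + r) * K ∧ ∀ x ∈ Set.Icc (0 : ℝ) 1,
      |Real.sin (2 * π * ((k : ℝ) + 1) * x) - p.eval x| ≤ ε / (8 * K) := by
  obtain ⟨p, hp, H⟩ := exists_sin_poly (2 * π * ((k : ℝ) + 1)) ((22 + r) * K) (by positivity)
  refine ⟨p, hp, fun x hx => (H x).trans ?_⟩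
  have hKr : (1 : ℝ) ≤ K := by exact_mod_cast hK1
  have hk : (k : ℝ) + 1 ≤ K := by exact_mod_cast k.2
  have hk0 : (0 : ℝ) ≤ (k : ℝ) := Nat.cast_nonneg _
  have hπ : 2 * π * Real.exp 1 ≤ 18 := by
    have h1 := Real.pi_lt_d2
    have h2 := Real.exp_one_lt_d9
    have h3 := Real.exp_pos 1
    nlinarith [Real.pi_pos]
  have h1 : Real.exp 1 * |2 * π * ((k : ℝ) + 1) * x| ≤ 18 * K := by
    rw [abs_of_nonneg (by have := hx.1; positivity)]
    calc Real.exp 1 * (2 * π * ((k : ℝ) + 1) * x)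
        = (2 * π * Real.exp 1) * (((k : ℝ) + 1) * x) := by ring
      _ ≤ 18 * (((k : ℝ) + 1) * 1) := by
          have := hx.1; have := hx.2
          gcongr
      _ ≤ _ := by linarith
  have hexpK : (K : ℝ) ≤ Real.exp K := by linarith [Real.add_one_le_exp (K : ℝ)]
  have h8 : (8 : ℝ) ≤ Real.exp K ^ 3 := by
    have : (2 : ℝ) ≤ Real.exp K := by linarith [Real.add_one_le_exp (K : ℝ)]
    nlinarith [pow_le_pow_left₀ (by norm_num) this 3]
  have hεr : 1 / ε ≤ Real.exp K ^ r := by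
    calc 1 / ε ≤ 3 / ε := by gcongr; norm_num
      _ ≤ (K : ℝ) ^ r := hK
      _ ≤ _ := by gcongr
  calc Real.exp (Real.exp 1 * |2 * π * ((k : ℝ) + 1) * x| - ((22 + r) * K : ℕ))
      ≤ Real.exp (-((4 + r : ℕ) * K)) := by
        gcongr
        push_cast
        linarith
    _ = 1 / (Real.exp K ^ 3 * Real.exp K ^ r * Real.exp K) := by
        rw [Real.exp_neg, Real.exp_nat_mul, one_div]
        congr 1
        ring
    _ ≤ 1 / (8 * (1 / ε) * K) := by gcongr
    _ = ε / (8 * K) := by field_simp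

/-- For every integer `r ≥ 1` there is a constant `C > 0` such that for every
`0 < ε < 1`, with `K = ⌈(3/ε)^{1/r}⌉`, there is a tanh-MLP network
`ũ : ℝ^{K+2} → ℝ` with at most `C (ε^{−3/r} + ε^{−1/r} log²(ε^{−(1+1/r)}))` weights
such that for every coefficient sequence with `Σ_{k≥1} (2πk)^{2r} c_k² ≤ 2`
(i.e. `‖f^{(r)}‖_{L²} ≤ 1`) and every `t ∈ [0,1]`,
`‖u(·,t) − ũ(c₁,…,c_K,t,·)‖_{L²[0,1]} ≤ ε`. -/
theorem spectral_PINN_heat_approximation (r : ℕ) (hr : 1 ≤ r) :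
    ∃ C : ℝ, 0 < C ∧
      ∀ ε : ℝ, 0 < ε → ε < 1 →
        ∀ K : ℕ, K = ⌈((3 : ℝ) / ε) ^ ((1 : ℝ) / r)⌉₊ →
          ∃ net : TanhMLP (K + 2) 1,
            (net.weights : ℝ) ≤
              C * (ε ^ (-(3 : ℝ) / r) +
                ε ^ (-(1 : ℝ) / r) * (Real.log (ε ^ (-(1 + 1 / (r : ℝ))))) ^ 2) ∧
            ∀ c : ℕ → ℝ,
              Summable (fun k : ℕ => (2 * π * ((k : ℝ) + 1)) ^ (2 * r) * c k ^ 2) →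
              (∑' k : ℕ, (2 * π * ((k : ℝ) + 1)) ^ (2 * r) * c k ^ 2) ≤ 2 →
              ∀ t ∈ Set.Icc (0 : ℝ) 1,
                Real.sqrt (∫ x in (0 : ℝ)..1,
                    (heatSol c x t -
                      net.eval (Fin.snoc (Fin.snoc (fun k : Fin K => c (k : ℕ)) t) x) 0) ^ 2)
                  ≤ ε := by
  refine ⟨64 * (10 * (22 + r) + 1), by positivity, fun ε hε hε1 K hKdef => ?_⟩
  have hr0 : (0 : ℝ) < r := by exact_mod_cast hr
  have h3 : (1 : ℝ) < 3 / ε := by rw [lt_div_iff₀ hε]; linarith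
  have hceil : (3 / ε) ^ ((1 : ℝ) / r) ≤ K := hKdef ▸ Nat.le_ceil _
  have hK : 3 / ε ≤ (K : ℝ) ^ r := by
    calc 3 / ε = ((3 / ε) ^ ((1 : ℝ) / r)) ^ r := by
          rw [one_div, Real.rpow_inv_natCast_pow (by positivity) (by omega)]
      _ ≤ _ := by gcongr
  have hK1 : 1 ≤ K := by
    have h : (1 : ℝ) ≤ (3 / ε) ^ ((1 : ℝ) / r) := Real.one_le_rpow h3.le (by positivity)
    exact_mod_cast h.trans hceil
  have hKr : (1 : ℝ) ≤ K := by exact_mod_cast hK1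
  have hKle : (K : ℝ) ≤ 4 * ε ^ (-(1 : ℝ) / r) := by
    have h1 : (K : ℝ) ≤ (3 / ε) ^ ((1 : ℝ) / r) + 1 := by
      rw [hKdef]; exact (Nat.ceil_lt_add_one (by positivity)).le
    have h2 : (3 / ε) ^ ((1 : ℝ) / r) = 3 ^ ((1 : ℝ) / r) * ε ^ (-(1 : ℝ) / r) := by
      rw [div_eq_mul_inv, Real.mul_rpow (by norm_num) (by positivity), Real.inv_rpow hε.le,
        ← Real.rpow_neg hε.le, neg_div]
    have h4 : (3 : ℝ) ^ ((1 : ℝ) / r) ≤ 3 := by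
      refine Real.rpow_le_self_of_one_le (by norm_num) ?_
      rw [div_le_one hr0]; exact_mod_cast hr
    have h5 : 1 ≤ ε ^ (-(1 : ℝ) / r) :=
      Real.one_le_rpow_of_pos_of_le_one_of_nonpos hε hε1.le
        (div_nonpos_of_nonpos_of_nonneg (by norm_num) hr0.le)
    rw [h2] at h1
    nlinarith
  have hK3 : (K : ℝ) ^ 3 ≤ 64 * ε ^ (-(3 : ℝ) / r) := by
    calc (K : ℝ) ^ 3 ≤ (4 * ε ^ (-(1 : ℝ) / r)) ^ 3 := by gcongr
      _ = 64 * (ε ^ (-(1 : ℝ) / r)) ^ 3 := by ring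
      _ = _ := by
        rw [← Real.rpow_mul_natCast hε.le]
        congr 2
        push_cast; ring
  choose p hp hpe using fun k => exists_mode_poly hε hK hK1 k
  obtain ⟨net, hw, hnet⟩ := exists_net_mode_sum
    (fun k : Fin K => -(4 * π ^ 2 * ((k : ℝ) + 1) ^ 2)) p hp
    (isCompact_closedBall (0 : Fin (K + 2) → ℝ) 1) (by positivity : 0 < ε / 8)
  refine ⟨net, ?_, fun c hc hc2 t ht => l2_error_le hr hε hK hc hc2 ht.1 _ fun x hx => ?_⟩
  · have hlog : 0 ≤ ε ^ (-(1 : ℝ) / r) * (Real.log (ε ^ (-(1 + 1 / (r : ℝ))))) ^ 2 := by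
      positivity
    have h1 : (net.weights : ℝ) ≤ (10 * (22 + r) + 1) * (K : ℝ) ^ 3 := by
      have hK2 : (K : ℝ) ^ 2 ≤ (K : ℝ) ^ 3 := pow_le_pow_right₀ hKr (by norm_num)
      have hK0 : (1 : ℝ) ≤ (K : ℝ) ^ 3 := one_le_pow₀ hKr
      rw [hw]
      push_cast
      nlinarith
    calc (net.weights : ℝ) ≤ (10 * (22 + r) + 1) * (K : ℝ) ^ 3 := h1
      _ ≤ (10 * (22 + r) + 1) * (64 * ε ^ (-(3 : ℝ) / r)) := by gcongr
      _ = 64 * (10 * (22 + r) + 1) * ε ^ (-(3 : ℝ) / r) := by ring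
      _ ≤ _ := by gcongr; linarith
  · have hcle := abs_coeff_le_one hr hc hc2
    have hmem : (Fin.snoc (Fin.snoc (fun k : Fin K => c (k : ℕ)) t) x : Fin (K + 2) → ℝ) ∈
        Metric.closedBall (0 : Fin (K + 2) → ℝ) 1 := by
      rw [mem_closedBall_zero_iff, pi_norm_le_iff_of_nonneg zero_le_one]
      intro j
      refine Fin.lastCases ?_ (fun j => ?_) j
      · simpa [abs_le] using ⟨by linarith [hx.1], hx.2⟩
      · refine Fin.lastCases ?_ (fun j => ?_) j
        · simpa [abs_le] using ⟨by linarith [ht.1], ht.2⟩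
        · simpa using hcle j
    have h1 := hnet _ hmem
    simp only [Fin.snoc_castSucc, Fin.snoc_last] at h1
    have h2 : |∑ k ∈ Finset.range K, Real.exp (-(4 * π ^ 2 * ((k : ℝ) + 1) ^ 2 * t)) * c k *
          Real.sin (2 * π * ((k : ℝ) + 1) * x) -
        ∑ k : Fin K, Real.exp (-(4 * π ^ 2 * ((k : ℝ) + 1) ^ 2) * t) * c k * (p k).eval x|
        ≤ ε / 8 := by
      rw [Finset.sum_range, ← Finset.sum_sub_distrib]
      refine (Finset.abs_sum_le_sum_abs _ _).trans ?_
      calc _ ≤ ∑ k : Fin K, ε / (8 * K) := by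
            refine Finset.sum_le_sum fun k _ => ?_
            rw [neg_mul, ← mul_sub, abs_mul, abs_mul, Real.abs_exp]
            refine le_trans (mul_le_of_le_one_left (abs_nonneg _) ?_) (hpe k x hx)
            refine mul_le_one₀ (Real.exp_le_one_iff.2 ?_) (abs_nonneg _) (hcle k)
            have := ht.1
            rw [neg_nonpos]
            positivity
        _ = ε / 8 := by
            rw [Finset.sum_const, Finset.card_univ, Fintype.card_fin, nsmul_eq_mul]
            field_simp
    refine (abs_sub_le _ _ _).trans ((add_le_add h2 h1).trans (by linarith))
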